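/- Let 𝓔_X be a ballean on X and 𝓔_Y a ballean on Y, both unbounded, with cov(𝓑_X) < add(𝓑_Y), where 𝓑_X and 𝓑_Y are the respective bornologies of bounded sets. If X and Y are both so-bounded, then the product ballean on X × Y is so-bounded. -/

import Mathlib

universe u

/-- A ballean on a set `X`: a family of entourages containing the diagonal,
closed (up to enlargement) under `E ∘ F⁻¹`, and covering `X × X`. -/
structure Ballean (X : Type*) where
  ent : Set (Set (X × X))
  diag : ∀ E ∈ ent, ∀ x : X, (x, x) ∈ E
  comp : ∀ E ∈ ent, ∀ F ∈ ent, ∃ D ∈ ent,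
    ∀ x z : X, (∃ y : X, (x, y) ∈ E ∧ (z, y) ∈ F) → (x, z) ∈ D
  cover : ∀ x y : X, ∃ E ∈ ent, (x, y) ∈ E

/-- The ball `E[x] = {y : (x,y) ∈ E}`. -/
def ball {X : Type*} (E : Set (X × X)) (x : X) : Set X := {y | (x, y) ∈ E}

/-- A set is bounded in a ballean if it is contained in some ball. -/
def Ballean.Bdd {X : Type*} (B : Ballean X) (S : Set X) : Prop :=
  ∃ E ∈ B.ent, ∃ x : X, S ⊆ ball E x

/-- `cof 𝓑`: minimal cardinality of a cofinal subfamily of `𝓑`. -/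
noncomputable def bornCof {X : Type u} (𝓑 : Set (Set X)) : Cardinal.{u} :=
  sInf {c : Cardinal.{u} | ∃ 𝓐 : Set (Set X), 𝓐 ⊆ 𝓑 ∧ Cardinal.mk 𝓐 = c ∧
    ∀ B ∈ 𝓑, ∃ A ∈ 𝓐, B ⊆ A}

/-- `non 𝓑`: minimal cardinality of a subset of `X` not in `𝓑`. -/
noncomputable def bornNon {X : Type u} (𝓑 : Set (Set X)) : Cardinal.{u} :=
  sInf {c : Cardinal.{u} | ∃ A : Set X, A ∉ 𝓑 ∧ Cardinal.mk A = c}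

/-- `cov 𝓑`: minimal cardinality of a subfamily of `𝓑` covering `X`. -/
noncomputable def bornCov {X : Type u} (𝓑 : Set (Set X)) : Cardinal.{u} :=
  sInf {c : Cardinal.{u} | ∃ 𝓐 : Set (Set X), 𝓐 ⊆ 𝓑 ∧ Cardinal.mk 𝓐 = c ∧
    ⋃₀ 𝓐 = Set.univ}

/-- `add 𝓑`: minimal cardinality of a subfamily of `𝓑` whose union is not in `𝓑`. -/
noncomputable def bornAdd {X : Type u} (𝓑 : Set (Set X)) : Cardinal.{u} :=
  sInf {c : Cardinal.{u} | ∃ 𝓐 : Set (Set X), 𝓐 ⊆ 𝓑 ∧ Cardinal.mk 𝓐 = c ∧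
    ⋃₀ 𝓐 ∉ 𝓑}

/-- A ballean is so-bounded if every slowly oscillating `f : X → ℝ` is bounded
outside some bounded set. -/
def Ballean.SoBounded {X : Type*} (B : Ballean X) : Prop :=
  ∀ f : X → ℝ,
    (∀ E ∈ B.ent, ∀ ε : ℝ, 0 < ε → ∃ S : Set X, B.Bdd S ∧
      ∀ x ∉ S, ∀ a ∈ ball E x, ∀ b ∈ ball E x, |f a - f b| < ε) →
    ∃ S : Set X, B.Bdd S ∧ ∃ C : ℝ, ∀ x ∉ S, |f x| ≤ C

/-!
A slowly oscillating `f : X × Y → ℝ` is, for `y` outside a bounded set, nearly constant on `A × {y}`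
for each bounded `A ⊆ X`. Fix `x₀ : X` and cover `X` by `cov 𝓑_X` bounded sets. The union of the
corresponding exceptional sets in `Y` is still bounded because `cov 𝓑_X < add 𝓑_Y`; so for `y`
outside a bounded `T`, `f (x, y)` stays within `1` of `f (x₀, y)` for *all* `x`, and so-boundedness
of `Y` bounds `f` on `X × (Y ∖ T)`. On the remaining strip `X × T` the roles are exchanged: for `x`
outside a bounded set, `f (x, y)` stays within `1` of `f (x, y₀)` for all `y ∈ T`, and it is
so-boundedness of `X` that bounds `f`.
-/

universe v

open Cardinal (lift lift_lt mk_range_le_lift)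
open Set
open scoped Cardinal

theorem exists_mk_eq_bornCov {X : Type u} {𝓑 : Set (Set X)} (h𝓑 : ⋃₀ 𝓑 = univ) :
    ∃ 𝓐 ⊆ 𝓑, #𝓐 = bornCov 𝓑 ∧ ⋃₀ 𝓐 = univ :=
  csInf_mem (s := {c | ∃ 𝓐 ⊆ 𝓑, #𝓐 = c ∧ ⋃₀ 𝓐 = univ}) ⟨_, 𝓑, subset_rfl, rfl, h𝓑⟩

theorem sUnion_mem_of_mk_lt_bornAdd {X : Type u} {𝓐 𝓑 : Set (Set X)} (h𝓐 : 𝓐 ⊆ 𝓑)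
    (hcard : #𝓐 < bornAdd 𝓑) : ⋃₀ 𝓐 ∈ 𝓑 := by
  by_contra hU
  exact notMem_of_lt_csInf' hcard ⟨𝓐, h𝓐, rfl, hU⟩

theorem iUnion_mem_of_mk_lt_bornAdd {ι : Type v} {X : Type u} {𝓑 : Set (Set X)} {T : ι → Set X}
    (hT : ∀ i, T i ∈ 𝓑) (hcard : lift.{u} #ι < lift.{v} (bornAdd 𝓑)) : ⋃ i, T i ∈ 𝓑 := by
  rw [← sUnion_range]
  exact sUnion_mem_of_mk_lt_bornAdd (range_subset_iff.2 hT)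
    (lift_lt.1 (mk_range_le_lift.trans_lt hcard))

namespace Ballean

section Bounded

variable {X : Type*} {B : Ballean X} {E F : Set (X × X)} {S T : Set X}

theorem exists_ent_inv (hE : E ∈ B.ent) : ∃ D ∈ B.ent, ∀ x y, (x, y) ∈ E → (y, x) ∈ D := by
  obtain ⟨D, hD, hED⟩ := B.comp E hE E hE
  exact ⟨D, hD, fun x y hxy ↦ hED y x ⟨y, B.diag E hE y, hxy⟩⟩

theorem exists_ent_comp (hE : E ∈ B.ent) (hF : F ∈ B.ent) :
    ∃ D ∈ B.ent, ∀ x y z, (x, y) ∈ E → (y, z) ∈ F → (x, z) ∈ D := by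
  obtain ⟨F', hF', hFF'⟩ := exists_ent_inv hF
  obtain ⟨D, hD, hEF'⟩ := B.comp E hE F' hF'
  exact ⟨D, hD, fun x y z hxy hyz ↦ hEF' x z ⟨y, hxy, hFF' y z hyz⟩⟩

theorem Bdd.mono (hT : B.Bdd T) (hST : S ⊆ T) : B.Bdd S := by
  obtain ⟨E, hE, x, hTE⟩ := hT
  exact ⟨E, hE, x, hST.trans hTE⟩

theorem bdd_singleton (x : X) : B.Bdd {x} := by
  obtain ⟨E, hE, hx⟩ := B.cover x x
  exact ⟨E, hE, x, singleton_subset_iff.2 hx⟩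

theorem sUnion_setOf_bdd : ⋃₀ {S | B.Bdd S} = univ :=
  eq_univ_of_forall fun x ↦ ⟨{x}, bdd_singleton x, rfl⟩

theorem Bdd.exists_subset_ball (hS : B.Bdd S) (x : X) : ∃ E ∈ B.ent, S ⊆ ball E x := by
  obtain ⟨E, hE, c, hSE⟩ := hS
  obtain ⟨F, hF, hxc⟩ := B.cover x c
  obtain ⟨D, hD, hFE⟩ := exists_ent_comp hF hE
  exact ⟨D, hD, fun y hy ↦ hFE x c y hxc (hSE hy)⟩

theorem Bdd.union (hS : B.Bdd S) (hT : B.Bdd T) : B.Bdd (S ∪ T) := by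
  obtain ⟨E, hE, x, hSE⟩ := hS
  obtain ⟨F, hF, hTF⟩ := hT.exists_subset_ball x
  obtain ⟨D, hD, hEF⟩ := exists_ent_comp hE hF
  refine ⟨D, hD, x, union_subset (fun y hy ↦ ?_) (fun y hy ↦ ?_)⟩
  · exact hEF x y y (hSE hy) (B.diag F hF y)
  · exact hEF x x y (B.diag E hE x) (hTF hy)

end Bounded

section SlowlyOscillating

variable {X : Type*} {B : Ballean X}

/-- Slow oscillation of `f` with respect to the ballean `B`: the oscillation of `f` on the balls of
any fixed entourage becomes arbitrarily small outside bounded sets. It is the hypothesis on `f` in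
`Ballean.SoBounded`. -/
def SlowlyOscillating (B : Ballean X) (f : X → ℝ) : Prop :=
  ∀ E ∈ B.ent, ∀ ε : ℝ, 0 < ε → ∃ S : Set X, B.Bdd S ∧
    ∀ x ∉ S, ∀ a ∈ ball E x, ∀ b ∈ ball E x, |f a - f b| < ε

theorem SlowlyOscillating.nonempty {f : X → ℝ} (hf : B.SlowlyOscillating f)
    (hB : B.ent.Nonempty) : Nonempty X := by
  obtain ⟨E, hE⟩ := hB
  obtain ⟨-, ⟨-, -, x, -⟩, -⟩ := hf E hE 1 one_pos
  exact ⟨x⟩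

theorem SoBounded.ent_nonempty (hB : B.SoBounded) : B.ent.Nonempty := by
  by_contra! hent
  obtain ⟨-, ⟨E, hE, -⟩, -⟩ := hB 0 (by simp [hent])
  simp [hent] at hE

end SlowlyOscillating

section Prod

variable {X Y : Type*} {BX : Ballean X} {BY : Ballean Y} {f : X × Y → ℝ}

/-- The product entourage `E ⊗ F` on `X × Y`. -/
def prodEnt (E : Set (X × X)) (F : Set (Y × Y)) : Set ((X × Y) × (X × Y)) :=
  {q | (q.1.1, q.2.1) ∈ E ∧ (q.1.2, q.2.2) ∈ F}

theorem ball_prodEnt (E : Set (X × X)) (F : Set (Y × Y)) (p : X × Y) :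
    ball (prodEnt E F) p = ball E p.1 ×ˢ ball F p.2 :=
  rfl

/-- The product ballean on `X × Y`, whose entourages are the products `E ⊗ F`. -/
def prod (BX : Ballean X) (BY : Ballean Y) : Ballean (X × Y) where
  ent := image2 prodEnt BX.ent BY.ent
  diag := by
    rintro _ ⟨E, hE, F, hF, rfl⟩ p
    exact ⟨BX.diag E hE p.1, BY.diag F hF p.2⟩
  comp := by
    rintro _ ⟨E, hE, F, hF, rfl⟩ _ ⟨E', hE', F', hF', rfl⟩
    obtain ⟨D, hD, hED⟩ := BX.comp E hE E' hE'
    obtain ⟨G, hG, hFG⟩ := BY.comp F hF F' hF'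
    refine ⟨prodEnt D G, mem_image2_of_mem hD hG, ?_⟩
    rintro p r ⟨q, hpq, hrq⟩
    exact ⟨hED _ _ ⟨q.1, hpq.1, hrq.1⟩, hFG _ _ ⟨q.2, hpq.2, hrq.2⟩⟩
  cover p q := by
    obtain ⟨E, hE, hpqE⟩ := BX.cover p.1 q.1
    obtain ⟨F, hF, hpqF⟩ := BY.cover p.2 q.2
    exact ⟨prodEnt E F, mem_image2_of_mem hE hF, hpqE, hpqF⟩

theorem ent_prod : (BX.prod BY).ent = image2 prodEnt BX.ent BY.ent :=
  rfl

theorem bdd_prod_iff {P : Set (X × Y)} :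
    (BX.prod BY).Bdd P ↔ ∃ S T, BX.Bdd S ∧ BY.Bdd T ∧ P ⊆ S ×ˢ T := by
  constructor
  · rintro ⟨_, ⟨E, hE, F, hF, rfl⟩, p, hP⟩
    exact ⟨ball E p.1, ball F p.2, ⟨E, hE, p.1, subset_rfl⟩, ⟨F, hF, p.2, subset_rfl⟩, hP⟩
  · rintro ⟨S, T, ⟨E, hE, x, hSE⟩, ⟨F, hF, y, hTF⟩, hP⟩
    exact ⟨prodEnt E F, mem_image2_of_mem hE hF, (x, y), hP.trans (prod_mono hSE hTF)⟩

theorem exists_bdd_prod_forall_notMem_iff {p : X × Y → Prop} :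
    (∃ P, (BX.prod BY).Bdd P ∧ ∀ q ∉ P, p q) ↔
      ∃ S T, BX.Bdd S ∧ BY.Bdd T ∧ ∀ q ∉ S ×ˢ T, p q := by
  constructor
  · rintro ⟨P, hP, hp⟩
    obtain ⟨S, T, hS, hT, hPST⟩ := bdd_prod_iff.1 hP
    exact ⟨S, T, hS, hT, fun q hq ↦ hp q fun hqP ↦ hq (hPST hqP)⟩
  · rintro ⟨S, T, hS, hT, hp⟩
    exact ⟨S ×ˢ T, bdd_prod_iff.2 ⟨S, T, hS, hT, subset_rfl⟩, hp⟩

theorem slowlyOscillating_prod_iff :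
    (BX.prod BY).SlowlyOscillating f ↔ ∀ E ∈ BX.ent, ∀ F ∈ BY.ent, ∀ ε : ℝ, 0 < ε →
      ∃ S T, BX.Bdd S ∧ BY.Bdd T ∧ ∀ p ∉ S ×ˢ T,
        ∀ a ∈ ball E p.1 ×ˢ ball F p.2, ∀ b ∈ ball E p.1 ×ˢ ball F p.2, |f a - f b| < ε := by
  simp only [SlowlyOscillating, exists_bdd_prod_forall_notMem_iff, ent_prod, forall_mem_image2,
    ball_prodEnt]

namespace SlowlyOscillating

theorem comp_swap (hf : (BX.prod BY).SlowlyOscillating f) :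
    (BY.prod BX).SlowlyOscillating (f ∘ Prod.swap) := by
  rw [slowlyOscillating_prod_iff] at hf ⊢
  intro F hF E hE ε hε
  obtain ⟨S, T, hS, hT, hfST⟩ := hf E hE F hF ε hε
  exact ⟨T, S, hT, hS, fun p hp a ha b hb ↦
    hfST p.swap (fun h ↦ hp h.symm) a.swap ha.symm b.swap hb.symm⟩

theorem comp_mk_left (hf : (BX.prod BY).SlowlyOscillating f) (x : X) :
    BY.SlowlyOscillating fun y ↦ f (x, y) := by
  rw [slowlyOscillating_prod_iff] at hf
  intro F hF ε hε
  obtain ⟨E, hE, hx⟩ := BX.cover x x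
  obtain ⟨_, T, -, hT, hfT⟩ := hf E hE F hF ε hε
  exact ⟨T, hT, fun y hy a ha b hb ↦
    hfT (x, y) (fun h ↦ hy h.2) (x, a) ⟨hx, ha⟩ (x, b) ⟨hx, hb⟩⟩

theorem exists_bdd_abs_sub_lt [Nonempty Y] (hf : (BX.prod BY).SlowlyOscillating f) {A : Set X}
    (hA : BX.Bdd A) (x₀ : X) {ε : ℝ} (hε : 0 < ε) :
    ∃ T, BY.Bdd T ∧ ∀ x ∈ A, ∀ y ∉ T, |f (x, y) - f (x₀, y)| < ε := by
  rw [slowlyOscillating_prod_iff] at hf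
  obtain ⟨E, hE, hAE⟩ := hA.exists_subset_ball x₀
  obtain ⟨y₀⟩ := ‹Nonempty Y›
  obtain ⟨F, hF, -⟩ := BY.cover y₀ y₀
  obtain ⟨_, T, -, hT, hfT⟩ := hf E hE F hF ε hε
  exact ⟨T, hT, fun x hx y hy ↦ hfT (x₀, y) (fun h ↦ hy h.2) (x, y)
    ⟨hAE hx, BY.diag F hF y⟩ (x₀, y) ⟨BX.diag E hE x₀, BY.diag F hF y⟩⟩

theorem exists_bdd_abs_sub_lt_sUnion {X : Type u} {Y : Type v} {BX : Ballean X} {BY : Ballean Y}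
    {f : X × Y → ℝ} [Nonempty Y] (hf : (BX.prod BY).SlowlyOscillating f) {𝓐 : Set (Set X)}
    (h𝓐 : ∀ A ∈ 𝓐, BX.Bdd A) (hcard : lift.{v} #𝓐 < lift.{u} (bornAdd {T | BY.Bdd T}))
    (x₀ : X) {ε : ℝ} (hε : 0 < ε) :
    ∃ T, BY.Bdd T ∧ ∀ x ∈ ⋃₀ 𝓐, ∀ y ∉ T, |f (x, y) - f (x₀, y)| < ε := by
  choose T hT hfT using fun A : 𝓐 ↦ hf.exists_bdd_abs_sub_lt (h𝓐 A A.2) x₀ hε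
  refine ⟨⋃ A, T A, iUnion_mem_of_mk_lt_bornAdd (𝓑 := {T | BY.Bdd T}) hT hcard, ?_⟩
  rintro x ⟨A, hA, hx⟩ y hy
  exact hfT ⟨A, hA⟩ x hx y fun hyT ↦ hy (mem_iUnion_of_mem _ hyT)

theorem exists_bdd_abs_le_of_abs_sub_lt (hf : (BX.prod BY).SlowlyOscillating f)
    (hY : BY.SoBounded) {A : Set X} {x₀ : X} {ε : ℝ}
    (hA : ∃ T, BY.Bdd T ∧ ∀ x ∈ A, ∀ y ∉ T, |f (x, y) - f (x₀, y)| < ε) :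
    ∃ T, BY.Bdd T ∧ ∃ C, ∀ x ∈ A, ∀ y ∉ T, |f (x, y)| ≤ C := by
  obtain ⟨T₁, hT₁, hfT₁⟩ := hA
  obtain ⟨T₂, hT₂, C, hC⟩ := hY _ (hf.comp_mk_left x₀)
  refine ⟨T₁ ∪ T₂, hT₁.union hT₂, ε + C, fun x hx y hy ↦ ?_⟩
  rw [mem_union, not_or] at hy
  calc
    |f (x, y)| = |f (x, y) - f (x₀, y) + f (x₀, y)| := by rw [sub_add_cancel]
    _ ≤ |f (x, y) - f (x₀, y)| + |f (x₀, y)| := abs_add_le _ _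
    _ ≤ ε + C := add_le_add (hfT₁ x hx y hy.1).le (hC y hy.2)

end SlowlyOscillating

theorem soBounded_prod_iff :
    (BX.prod BY).SoBounded ↔ ∀ f : X × Y → ℝ,
      (∀ E ∈ BX.ent, ∀ F ∈ BY.ent, ∀ ε : ℝ, 0 < ε →
        ∃ S T, BX.Bdd S ∧ BY.Bdd T ∧ ∀ p ∉ S ×ˢ T,
          ∀ a ∈ ball E p.1 ×ˢ ball F p.2, ∀ b ∈ ball E p.1 ×ˢ ball F p.2, |f a - f b| < ε) →
      ∃ S T, BX.Bdd S ∧ BY.Bdd T ∧ ∃ C : ℝ, ∀ p ∉ S ×ˢ T, |f p| ≤ C := by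
  refine forall_congr' fun f ↦ imp_congr slowlyOscillating_prod_iff ?_
  constructor
  · rintro ⟨P, hP, C, hC⟩
    obtain ⟨S, T, hS, hT, hfST⟩ := exists_bdd_prod_forall_notMem_iff.1 ⟨P, hP, hC⟩
    exact ⟨S, T, hS, hT, C, hfST⟩
  · rintro ⟨S, T, hS, hT, C, hC⟩
    obtain ⟨P, hP, hfP⟩ := exists_bdd_prod_forall_notMem_iff.2 ⟨S, T, hS, hT, hC⟩
    exact ⟨P, hP, C, hfP⟩

end Prod

end Ballean

open Ballean in
theorem prod_soBounded_of_cov_lt_add_general {X : Type u} {Y : Type v} {BX : Ballean X}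
    {BY : Ballean Y}
    (hcard : lift.{v} (bornCov {S | BX.Bdd S}) < lift.{u} (bornAdd {T | BY.Bdd T}))
    (hX : BX.SoBounded) (hY : BY.SoBounded) : (BX.prod BY).SoBounded := by
  intro f (hf : (BX.prod BY).SlowlyOscillating f)
  obtain ⟨x₀, y₀⟩ := hf.nonempty (hX.ent_nonempty.image2 hY.ent_nonempty)
  have : Nonempty X := ⟨x₀⟩
  have : Nonempty Y := ⟨y₀⟩
  obtain ⟨𝓐, h𝓐, h𝓐card, h𝓐univ⟩ := exists_mk_eq_bornCov (sUnion_setOf_bdd (B := BX))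
  rw [← h𝓐card] at hcard
  obtain ⟨T, hT, C, hC⟩ := hf.exists_bdd_abs_le_of_abs_sub_lt hY
    (hf.exists_bdd_abs_sub_lt_sUnion h𝓐 hcard x₀ one_pos)
  obtain ⟨S, hS, D, hD⟩ := hf.comp_swap.exists_bdd_abs_le_of_abs_sub_lt hX
    (hf.comp_swap.exists_bdd_abs_sub_lt hT y₀ one_pos)
  refine ⟨S ×ˢ T, bdd_prod_iff.2 ⟨S, T, hS, hT, subset_rfl⟩, max C D, fun (x, y) hxy ↦ ?_⟩
  by_cases hy : y ∈ T
  · exact le_max_of_le_right (hD y hy x fun hx ↦ hxy ⟨hx, hy⟩)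
  · exact le_max_of_le_left (hC x (h𝓐univ ▸ mem_univ x) y hy)

/-- If `X`, `Y` are unbounded so-bounded balleans with `cov 𝓑_X < add 𝓑_Y`,
then the product ballean on `X × Y` is so-bounded. -/
theorem prod_soBounded_of_cov_lt_add {X Y : Type u} (BX : Ballean X) (BY : Ballean Y)
    (hXu : ¬ BX.Bdd Set.univ) (hYu : ¬ BY.Bdd Set.univ)
    (hcard : bornCov {S : Set X | BX.Bdd S} < bornAdd {T : Set Y | BY.Bdd T})
    (hXso : BX.SoBounded) (hYso : BY.SoBounded) :
    ∀ f : X × Y → ℝ,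
      (∀ E ∈ BX.ent, ∀ F ∈ BY.ent, ∀ ε : ℝ, 0 < ε →
        ∃ (S : Set X) (T : Set Y), BX.Bdd S ∧ BY.Bdd T ∧
          ∀ p : X × Y, p ∉ S ×ˢ T →
            ∀ a ∈ (ball E p.1) ×ˢ (ball F p.2), ∀ b ∈ (ball E p.1) ×ˢ (ball F p.2),
              |f a - f b| < ε) →
      ∃ (S : Set X) (T : Set Y), BX.Bdd S ∧ BY.Bdd T ∧
        ∃ C : ℝ, ∀ p : X × Y, p ∉ S ×ˢ T → |f p| ≤ C :=
  Ballean.soBounded_prod_iff.1 <|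
    prod_soBounded_of_cov_lt_add_general (by simpa only [Cardinal.lift_id]) hXso hYso
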